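/- Let d = 2κ be even and let γ_d¹, …, γ_d^{d+1} be the Dirac matrices of size 2^κ given by the recursive construction. Then for any vectors z₁, …, z_d ∈ ℝ^d, trace( γ_d^{d+1} · ∏_{j=1}^{d} ( Σ_{l=1}^{d} z_{j,l} γ_d^l ) ) = (2i)^{d/2} · det(z₁, …, z_d), where det(z₁,…,z_d) is the determinant of the d×d matrix with rows z₁,…,z_d and the product is taken in the order j = 1, …, d. -/

import Mathlib

open Matrix

/-- Pauli matrix σ₁. -/
noncomputable def pauli1 : Matrix (Fin 2) (Fin 2) ℂ := !![0, 1; 1, 0]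

/-- Pauli matrix σ₂. -/
noncomputable def pauli2 : Matrix (Fin 2) (Fin 2) ℂ := !![0, -Complex.I; Complex.I, 0]

/-- Pauli matrix σ₃. -/
noncomputable def pauli3 : Matrix (Fin 2) (Fin 2) ℂ := !![1, 0; 0, -1]

/-- Re-index a square matrix along an equality of dimensions. -/
noncomputable def castSq {m n : ℕ} (h : m = n) (A : Matrix (Fin m) (Fin m) ℂ) :
    Matrix (Fin n) (Fin n) ℂ :=
  Matrix.reindex (finCongr h) (finCongr h) A

/-- Kronecker product of a 2×2 matrix with an n×n matrix, with indices flattened. -/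
noncomputable def kron2 {n : ℕ} (A : Matrix (Fin 2) (Fin 2) ℂ) (B : Matrix (Fin n) (Fin n) ℂ) :
    Matrix (Fin (2 * n)) (Fin (2 * n)) ℂ :=
  Matrix.reindex finProdFinEquiv finProdFinEquiv (Matrix.kroneckerMap (· * ·) A B)

/-- The recursively constructed Dirac matrices: `diracGamma κ j` is the `j`-th Dirac matrix
(1-indexed, `1 ≤ j ≤ 2κ+1`) of size `2^κ`. For κ = 1 these are the Pauli matrices; the
recursion is `γ_{d+2}^j = σ₁ ⊗ γ_d^j` (`1 ≤ j ≤ d+1`), `γ_{d+2}^{d+2} = σ₂ ⊗ I`,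
`γ_{d+2}^{d+3} = σ₃ ⊗ I` for `d = 2κ`. -/
noncomputable def diracGamma : (κ : ℕ) → ℕ → Matrix (Fin (2 ^ κ)) (Fin (2 ^ κ)) ℂ
  | 0, _ => 1
  | 1, j => castSq (by norm_num)
      (if j = 1 then pauli1 else if j = 2 then pauli2 else if j = 3 then pauli3 else 1)
  | (κ + 2), j => castSq (by rw [pow_succ]; ring)
      (if j ≤ 2 * (κ + 1) + 1 then kron2 pauli1 (diracGamma (κ + 1) j)
       else if j = 2 * (κ + 1) + 2 then kron2 pauli2 1
       else if j = 2 * (κ + 1) + 3 then kron2 pauli3 1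
       else 1)

theorem castSq_mul' {m n : ℕ} (h : m = n) (A B : Matrix (Fin m) (Fin m) ℂ) :
    castSq h A * castSq h B = castSq h (A * B) := by
  subst h; rfl

theorem castSq_one' {m n : ℕ} (h : m = n) : castSq h (1 : Matrix (Fin m) (Fin m) ℂ) = 1 := by
  subst h; rfl

theorem castSq_neg' {m n : ℕ} (h : m = n) (A : Matrix (Fin m) (Fin m) ℂ) :
    castSq h (-A) = -castSq h A := by
  subst h; rfl

theorem castSq_smul' {m n : ℕ} (h : m = n) (c : ℂ) (A : Matrix (Fin m) (Fin m) ℂ) :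
    castSq h (c • A) = c • castSq h A := by
  subst h; rfl

theorem kron2_mul' {n : ℕ} (A B : Matrix (Fin 2) (Fin 2) ℂ) (C D : Matrix (Fin n) (Fin n) ℂ) :
    kron2 A C * kron2 B D = kron2 (A * B) (C * D) := by
  unfold kron2
  rw [Matrix.reindex_apply, Matrix.reindex_apply, Matrix.reindex_apply,
    Matrix.submatrix_mul_equiv]
  congr 1
  exact (Matrix.mul_kronecker_mul A B C D).symm

theorem kron2_one' {n : ℕ} : kron2 (1 : Matrix (Fin 2) (Fin 2) ℂ) (1 : Matrix (Fin n) (Fin n) ℂ) = 1 := by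
  unfold kron2
  rw [Matrix.reindex_apply]
  have := Matrix.one_kronecker_one (α := ℂ) (m := Fin 2) (n := Fin n)
  rw [this]
  simp

theorem kron2_smul_l {n : ℕ} (c : ℂ) (A : Matrix (Fin 2) (Fin 2) ℂ) (C : Matrix (Fin n) (Fin n) ℂ) :
    kron2 (c • A) C = c • kron2 A C := by
  ext i j; simp [kron2, mul_assoc]

theorem kron2_smul_r {n : ℕ} (c : ℂ) (A : Matrix (Fin 2) (Fin 2) ℂ) (C : Matrix (Fin n) (Fin n) ℂ) :
    kron2 A (c • C) = c • kron2 A C := by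
  ext i j; simp [kron2, mul_left_comm]

theorem kron2_neg_l {n : ℕ} (A : Matrix (Fin 2) (Fin 2) ℂ) (C : Matrix (Fin n) (Fin n) ℂ) :
    kron2 (-A) C = - kron2 A C := by
  ext i j; simp [kron2]

theorem kron2_neg_r {n : ℕ} (A : Matrix (Fin 2) (Fin 2) ℂ) (C : Matrix (Fin n) (Fin n) ℂ) :
    kron2 A (-C) = - kron2 A C := by
  ext i j; simp [kron2]

theorem p11 : pauli1 * pauli1 = 1 := by
  ext i j; fin_cases i <;> fin_cases j <;> simp [pauli1]
theorem p22 : pauli2 * pauli2 = 1 := by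
  ext i j; fin_cases i <;> fin_cases j <;> simp [pauli2]
theorem p33 : pauli3 * pauli3 = 1 := by
  ext i j; fin_cases i <;> fin_cases j <;> simp [pauli3]
theorem p12 : pauli1 * pauli2 = Complex.I • pauli3 := by
  ext i j; fin_cases i <;> fin_cases j <;> simp [pauli1, pauli2, pauli3]
theorem p21 : pauli2 * pauli1 = -(Complex.I • pauli3) := by
  ext i j; fin_cases i <;> fin_cases j <;> simp [pauli1, pauli2, pauli3]
theorem p13 : pauli1 * pauli3 = -(Complex.I • pauli2) := by
  ext i j; fin_cases i <;> fin_cases j <;> simp [pauli1, pauli2, pauli3]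
theorem p31 : pauli3 * pauli1 = Complex.I • pauli2 := by
  ext i j; fin_cases i <;> fin_cases j <;> simp [pauli1, pauli2, pauli3]
theorem p23 : pauli2 * pauli3 = Complex.I • pauli1 := by
  ext i j; fin_cases i <;> fin_cases j <;> simp [pauli1, pauli2, pauli3]
theorem p32 : pauli3 * pauli2 = -(Complex.I • pauli1) := by
  ext i j; fin_cases i <;> fin_cases j <;> simp [pauli1, pauli2, pauli3]

theorem dg_lt (κ j : ℕ) (h : j ≤ 2 * (κ + 1) + 1) : diracGamma (κ + 2) j =
    castSq (by rw [pow_succ]; ring) (kron2 pauli1 (diracGamma (κ + 1) j)) := by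
  rw [diracGamma, if_pos h]

theorem dg_2 (κ : ℕ) : diracGamma (κ + 2) (2 * (κ + 1) + 2) =
    castSq (by rw [pow_succ]; ring) (kron2 pauli2 (1 : Matrix (Fin (2 ^ (κ + 1))) (Fin (2 ^ (κ + 1))) ℂ)) := by
  rw [diracGamma, if_neg (by omega), if_pos rfl]

theorem dg_3 (κ : ℕ) : diracGamma (κ + 2) (2 * (κ + 1) + 3) =
    castSq (by rw [pow_succ]; ring) (kron2 pauli3 (1 : Matrix (Fin (2 ^ (κ + 1))) (Fin (2 ^ (κ + 1))) ℂ)) := by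
  rw [diracGamma, if_neg (by omega), if_neg (by omega), if_pos rfl]

theorem dg_sq (κ : ℕ) : ∀ j, 1 ≤ j → j ≤ 2 * (κ + 1) + 1 →
    diracGamma (κ + 1) j * diracGamma (κ + 1) j = 1 := by
  induction κ with
  | zero =>
    intro j h1 h2
    obtain rfl | rfl | rfl : j = 1 ∨ j = 2 ∨ j = 3 := by omega
    all_goals
      simp [diracGamma, castSq_mul', castSq_one', p11, p22, p33]
  | succ κ ih =>
    intro j h1 h2
    obtain h | rfl | rfl : j ≤ 2 * (κ + 1) + 1 ∨ j = 2 * (κ + 1) + 2 ∨ j = 2 * (κ + 1) + 3 := by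
      omega
    · rw [dg_lt _ _ h, castSq_mul', kron2_mul', p11, ih j h1 h, kron2_one', castSq_one']
    · rw [dg_2, castSq_mul', kron2_mul', p22, one_mul, kron2_one', castSq_one']
    · rw [dg_3, castSq_mul', kron2_mul', p33, one_mul, kron2_one', castSq_one']

theorem dg_anti_lt (κ : ℕ) : ∀ j k, 1 ≤ j → j < k → k ≤ 2 * (κ + 1) + 1 →
    diracGamma (κ + 1) j * diracGamma (κ + 1) k =
      -(diracGamma (κ + 1) k * diracGamma (κ + 1) j) := by
  induction κ with
  | zero =>
    intro j k h1 h2 h3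
    obtain ⟨rfl, rfl⟩ | ⟨rfl, rfl⟩ | ⟨rfl, rfl⟩ :
      (j = 1 ∧ k = 2) ∨ (j = 1 ∧ k = 3) ∨ (j = 2 ∧ k = 3) := by omega
    all_goals
      simp [diracGamma, castSq_mul', p12, p13, p23, p21, p31, p32, castSq_neg']
  | succ κ ih =>
    intro j k h1 h2 h3
    obtain h | rfl | rfl : k ≤ 2 * (κ + 1) + 1 ∨ k = 2 * (κ + 1) + 2 ∨ k = 2 * (κ + 1) + 3 := by
      omega
    · rw [dg_lt _ _ h, dg_lt _ _ (by omega), castSq_mul', castSq_mul', kron2_mul', kron2_mul',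
        ih j k h1 h2 h, kron2_neg_r, castSq_neg']
    · rw [dg_2, dg_lt _ _ (by omega), castSq_mul', castSq_mul', kron2_mul', kron2_mul',
        p12, p21, kron2_neg_l, castSq_neg', neg_neg, one_mul, mul_one]
    · obtain h | rfl : j ≤ 2 * (κ + 1) + 1 ∨ j = 2 * (κ + 1) + 2 := by omega
      · rw [dg_3, dg_lt _ _ h, castSq_mul', castSq_mul', kron2_mul', kron2_mul',
          p13, p31, kron2_neg_l, castSq_neg', one_mul, mul_one]
      · rw [dg_3, dg_2, castSq_mul', castSq_mul', kron2_mul', kron2_mul',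
          p23, p32, kron2_neg_l, castSq_neg', neg_neg]

theorem dg_anti (κ : ℕ) (j k : ℕ) (hj : 1 ≤ j) (hk : 1 ≤ k) (hj' : j ≤ 2 * (κ + 1) + 1)
    (hk' : k ≤ 2 * (κ + 1) + 1) (h : j ≠ k) :
    diracGamma (κ + 1) j * diracGamma (κ + 1) k =
      -(diracGamma (κ + 1) k * diracGamma (κ + 1) j) := by
  rcases lt_or_gt_of_ne h with h | h
  · exact dg_anti_lt κ j k hj h hk'
  · rw [dg_anti_lt κ k j hk h hj', neg_neg]

theorem prod_kron {m n : ℕ} (h : 2 * m = n) (A : Matrix (Fin 2) (Fin 2) ℂ)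
    (g : ℕ → Matrix (Fin m) (Fin m) ℂ) (L : List ℕ) :
    (L.map fun j => castSq h (kron2 A (g j))).prod =
      castSq h (kron2 (A ^ L.length) (L.map g).prod) := by
  induction L with
  | nil => simp [kron2_one', castSq_one']
  | cons a L ih =>
    simp only [List.map_cons, List.prod_cons, ih, castSq_mul', kron2_mul', List.length_cons,
      pow_succ']

theorem dg_prod (κ : ℕ) : ((List.range (2 * (κ + 1) + 1)).map
    fun j => diracGamma (κ + 1) (j + 1)).prod = Complex.I ^ (κ + 1) • 1 := by
  induction κ with
  | zero =>
    simp [diracGamma, List.range_succ, castSq_mul', p23, p11, castSq_smul', castSq_one']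
  | succ κ ih =>
    have e : 2 * (κ + 1 + 1) + 1 = 2 * (κ + 1) + 1 + 1 + 1 := by ring
    rw [e, List.range_succ, List.range_succ]
    simp only [List.map_append, List.prod_append, List.map_cons, List.map_nil, List.prod_cons,
      List.prod_nil, mul_one]
    have h : (List.range (2 * (κ + 1) + 1)).map (fun j => diracGamma (κ + 1 + 1) (j + 1)) =
        (List.range (2 * (κ + 1) + 1)).map (fun j => castSq (by rw [pow_succ]; ring)
          (kron2 pauli1 (diracGamma (κ + 1) (j + 1)))) := by
      apply List.map_congr_left
      intro j hj
      rw [List.mem_range] at hj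
      exact dg_lt κ (j + 1) (by omega)
    rw [h, prod_kron _ pauli1 (fun j => diracGamma (κ + 1) (j + 1)), ih, dg_2, dg_3]
    have hp : pauli1 ^ (2 * (κ + 1) + 1) = pauli1 := by
      rw [pow_succ, pow_mul, pow_two, p11, one_pow, one_mul]
    rw [List.length_range, hp]
    rw [castSq_mul', kron2_mul', castSq_mul', kron2_mul', p12, smul_mul_assoc, p33, mul_one,
      mul_one, kron2_smul_r, kron2_smul_l, kron2_one', castSq_smul', castSq_smul', castSq_one',
      smul_smul, pow_succ Complex.I (κ + 1)]

theorem prod_swap {R : Type*} [Ring R] : ∀ (n : ℕ) (g : Fin (n + 1) → R)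
    (_ : ∀ i j, i ≠ j → g i * g j = -(g j * g i)) (i : Fin n),
    (List.ofFn (g ∘ Equiv.swap i.castSucc i.succ)).prod = -(List.ofFn g).prod
  | 0, _, _, i => i.elim0
  | n + 1, g, hg, i => by
    refine Fin.cases ?_ (fun j => ?_) i
    · rw [List.ofFn_succ, List.ofFn_succ, List.ofFn_succ, List.ofFn_succ]
      simp only [List.prod_cons, Function.comp, Fin.castSucc_zero, Equiv.swap_apply_left,
        Equiv.swap_apply_right]
      rw [← mul_assoc, ← mul_assoc, ← neg_mul, hg _ _ (Fin.succ_ne_zero 0)]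
      congr 4
    · rw [List.ofFn_succ, List.ofFn_succ (f := g)]
      have h := prod_swap n (fun k => g k.succ)
        (fun i j hij => hg _ _ (fun h => hij (Fin.succ_injective _ h))) j
      simp only [List.prod_cons, Function.comp] at h ⊢
      rw [Equiv.swap_apply_of_ne_of_ne (Ne.symm (by simp [← Fin.succ_castSucc]))
        (Fin.succ_ne_zero _).symm, ← mul_neg, ← h]
      congr 3
      funext k
      rw [← Fin.succ_castSucc, (Fin.succ_injective _).swap_apply]
      rfl

theorem prod_perm {R : Type*} [Ring R] (n : ℕ) (σ : Equiv.Perm (Fin (n + 1))) :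
    ∀ (g : Fin (n + 1) → R) (_ : ∀ i j, i ≠ j → g i * g j = -(g j * g i)),
    (List.ofFn (g ∘ σ)).prod = ((Equiv.Perm.sign σ : ℤ) : R) * (List.ofFn g).prod := by
  have hσ : σ ∈ Submonoid.closure
      (Set.range fun i : Fin n => Equiv.swap i.castSucc i.succ) := by
    rw [Equiv.Perm.mclosure_swap_castSucc_succ]; trivial
  induction hσ using Submonoid.closure_induction with
  | mem x hx =>
    obtain ⟨i, rfl⟩ := hx
    intro g hg
    rw [prod_swap n g hg i, Equiv.Perm.sign_swap (Fin.castSucc_lt_succ).ne]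
    simp
  | one => intro g hg; simp
  | mul x y _ _ hx hy =>
    intro g hg
    have : g ∘ ⇑(x * y) = (g ∘ x) ∘ y := rfl
    rw [this, hy (g ∘ x) (fun i j hij => hg _ _ (fun h => hij (x.injective h))), hx g hg]
    rw [Equiv.Perm.sign_mul, ← mul_assoc, mul_comm (Equiv.Perm.sign x)]
    push_cast
    rfl

theorem prod_anticomm {R : Type*} [Ring R] (x : R) (L : List R)
    (h : ∀ y ∈ L, x * y = -(y * x)) : x * L.prod = (-1) ^ L.length * (L.prod * x) := by
  induction L with
  | nil => simp
  | cons a L ih =>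
    rw [List.prod_cons, ← mul_assoc, h a (by simp), neg_mul, mul_assoc,
      ih (fun y hy => h y (by simp [hy])), List.length_cons, pow_succ']
    rw [← mul_assoc a, ((Commute.neg_one_right a).pow_right _).eq]
    simp [mul_assoc]

theorem trace_miss (κ : ℕ) (r : Fin (2 * (κ + 1)) → Fin (2 * (κ + 1)))
    (m : Fin (2 * (κ + 1))) (hm : ∀ j, r j ≠ m) :
    Matrix.trace (diracGamma (κ + 1) (2 * (κ + 1) + 1) *
      (List.ofFn fun j => diracGamma (κ + 1) ((r j : ℕ) + 1)).prod) = 0 := by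
  set P := (List.ofFn fun j => diracGamma (κ + 1) ((r j : ℕ) + 1)).prod with hP
  set x := diracGamma (κ + 1) ((m : ℕ) + 1) with hx
  set G := diracGamma (κ + 1) (2 * (κ + 1) + 1) with hG
  have h1 : x * x = 1 := dg_sq κ _ (by omega) (by omega)
  have h2 : x * G = -(G * x) :=
    dg_anti κ _ _ (by omega) (by omega) (by omega) (by omega) (by omega)
  have h3 : x * P = P * x := by
    rw [hP, prod_anticomm x]
    · rw [List.length_ofFn, pow_mul, neg_one_sq, one_pow, one_mul]
    · intro y hy
      rw [List.mem_ofFn] at hy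
      obtain ⟨j, rfl⟩ := hy
      have := hm j
      exact dg_anti κ _ _ (by omega) (by omega) (by omega) (by omega)
        (fun h => hm j (Fin.ext (by omega)))
  have h4 : Matrix.trace (G * P) = -Matrix.trace (G * P) := by
    calc Matrix.trace (G * P) = Matrix.trace (x * (x * (G * P))) := by
          rw [← mul_assoc x x, h1, one_mul]
      _ = Matrix.trace ((x * (G * P)) * x) := Matrix.trace_mul_comm _ _
      _ = Matrix.trace (-(G * P)) := by
          congr 1
          rw [← mul_assoc x, h2, neg_mul, mul_assoc G, h3, neg_mul, mul_assoc, mul_assoc P, h1,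
            mul_one]
      _ = _ := Matrix.trace_neg _
  exact self_eq_neg.mp h4

theorem trace_top (κ : ℕ) :
    Matrix.trace (diracGamma (κ + 1) (2 * (κ + 1) + 1) *
      (List.ofFn fun j : Fin (2 * (κ + 1)) => diracGamma (κ + 1) ((j : ℕ) + 1)).prod) =
      (2 * Complex.I) ^ (κ + 1) := by
  have h := dg_prod κ
  rw [List.range_succ] at h
  simp only [List.map_append, List.prod_append, List.map_cons, List.map_nil, List.prod_cons,
      List.prod_nil, mul_one] at h
  rw [Matrix.trace_mul_comm]
  have e : (List.ofFn fun j : Fin (2 * (κ + 1)) => diracGamma (κ + 1) ((j : ℕ) + 1)) =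
      (List.range (2 * (κ + 1))).map fun j => diracGamma (κ + 1) (j + 1) := by
    apply List.ext_getElem
    · rw [List.length_ofFn, List.length_map, List.length_range]
    · intro i h1 h2
      rw [List.getElem_ofFn, List.getElem_map, List.getElem_range]
  rw [e, h, Matrix.trace_smul, Matrix.trace_one]
  simp [mul_pow, mul_comm]

/-- For even `d = 2κ` and vectors `z₁, …, z_d ∈ ℝ^d`:
`trace(γ^{d+1} ∏ⱼ (Σₗ z_{j,l} γ^l)) = (2i)^{d/2} det(z₁,…,z_d)`. -/
theorem trace_dirac_det (κ : ℕ) (hκ : 1 ≤ κ) (z : Fin (2 * κ) → Fin (2 * κ) → ℝ) :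
    Matrix.trace (diracGamma κ (2 * κ + 1) *
        (List.ofFn fun j : Fin (2 * κ) =>
          ∑ l : Fin (2 * κ), ((z j l : ℝ) : ℂ) • diracGamma κ ((l : ℕ) + 1)).prod)
      = (2 * Complex.I) ^ κ * ((Matrix.det (Matrix.of z) : ℝ) : ℂ) := by
  obtain ⟨κ, rfl⟩ : ∃ k, κ = k + 1 := ⟨κ - 1, by omega⟩
  have hexp : (List.ofFn fun j : Fin (2 * (κ + 1)) =>
      ∑ l : Fin (2 * (κ + 1)), ((z j l : ℝ) : ℂ) • diracGamma (κ + 1) ((l : ℕ) + 1)).prod =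
      ∑ r : Fin (2 * (κ + 1)) → Fin (2 * (κ + 1)), (∏ j, ((z j (r j) : ℝ) : ℂ)) •
        (List.ofFn fun j => diracGamma (κ + 1) ((r j : ℕ) + 1)).prod := by
    have h := (MultilinearMap.mkPiAlgebraFin ℂ (2 * (κ + 1))
      (Matrix (Fin (2 ^ (κ + 1))) (Fin (2 ^ (κ + 1))) ℂ)).map_sum
      (fun j (l : Fin (2 * (κ + 1))) => ((z j l : ℝ) : ℂ) • diracGamma (κ + 1) ((l : ℕ) + 1))
    simp only [MultilinearMap.map_smul_univ, MultilinearMap.mkPiAlgebraFin_apply] at h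
    exact h
  rw [hexp, Finset.mul_sum, Matrix.trace_sum]
  simp only [mul_smul_comm, Matrix.trace_smul]
  have hzero : ∀ r : Fin (2 * (κ + 1)) → Fin (2 * (κ + 1)), ¬ Function.Bijective r →
      Matrix.trace (diracGamma (κ + 1) (2 * (κ + 1) + 1) *
      (List.ofFn fun j => diracGamma (κ + 1) ((r j : ℕ) + 1)).prod) = 0 := by
    intro r hr
    rw [← Finite.surjective_iff_bijective] at hr
    unfold Function.Surjective at hr
    push Not at hr
    obtain ⟨m, hm⟩ := hr
    exact trace_miss κ r m hm
  have hperm : ∀ σ : Equiv.Perm (Fin (2 * (κ + 1))),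
      Matrix.trace (diracGamma (κ + 1) (2 * (κ + 1) + 1) *
      (List.ofFn fun j => diracGamma (κ + 1) ((σ j : ℕ) + 1)).prod) =
      ((Equiv.Perm.sign σ : ℤ) : ℂ) * (2 * Complex.I) ^ (κ + 1) := by
    intro σ
    have h := prod_perm (2 * κ + 1) σ
      (fun j : Fin (2 * (κ + 1)) => diracGamma (κ + 1) ((j : ℕ) + 1))
      (fun i j hij => dg_anti κ _ _ (by omega) (by omega) (by omega) (by omega)
        (fun h => hij (Fin.ext (by omega))))
    have h' : (List.ofFn fun j => diracGamma (κ + 1) ((σ j : ℕ) + 1)).prod = _ := h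
    rw [h', ← zsmul_eq_mul, mul_smul_comm, Matrix.trace_smul, zsmul_eq_mul]
    congr 1
    exact trace_top κ
  rw [← Matrix.det_transpose, Matrix.det_apply', Complex.ofReal_sum, Finset.mul_sum]
  symm
  apply Finset.sum_of_injOn (fun σ : Equiv.Perm (Fin (2 * (κ + 1))) => (σ : _ → _))
  · intro a _ b _ h
    exact Equiv.coe_fn_injective h
  · intro a _; simp
  · intro r _ hr
    rw [hzero r, smul_zero]
    intro hb
    exact hr ⟨Equiv.ofBijective r hb, by simp, rfl⟩
  · intro σ _
    rw [hperm σ]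
    simp only [Matrix.transpose_apply, Matrix.of_apply, smul_eq_mul]
    push_cast
    ring
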